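/- Suppose 2 ≤ k ≤ n are integers with n odd, and f : V(C_n) → {1,...,k} is a k-color weak maximizer of the Wiener index W on C_n. Then W(f) = min{ W(f') : f' a k-color weak maximizer of W on C_n } if and only if the numbers of vertices in any two color classes of f differ by at most one. -/

import Mathlib

open SimpleGraph Finset

/-- The cycle graph on vertex set `ZMod n`, with an edge between `i` and `i+1` (mod `n`). -/
def cycleGraphZMod (n : ℕ) : SimpleGraph (ZMod n) :=
  SimpleGraph.fromRel (fun u v => v = u + 1)

/-- The Wiener index of a set of vertices: the sum of all pairwise geodesic distances. -/
noncomputable def wienerSet {V : Type*} [Fintype V] [DecidableEq V]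
    (G : SimpleGraph V) (A : Finset V) : ℕ :=
  (∑ p ∈ A.offDiag, G.dist p.1 p.2) / 2

/-- `A` is a maximizer of `W` on `G`. -/
def IsWienerMaximizer {V : Type*} [Fintype V] [DecidableEq V]
    (G : SimpleGraph V) (A : Finset V) : Prop :=
  ∀ B : Finset V, B.card = A.card → wienerSet G B ≤ wienerSet G A

/-- `A ⊆ V(C_n)` is almost good. -/
def AlmostGood (n : ℕ) (A : Finset (ZMod n)) : Prop :=
  A.card = 1 ∨ A.card = n - 1 ∨
    ∃ c₁ c₂ : ((cycleGraphZMod n).induce (↑A : Set (ZMod n))).ConnectedComponent,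
      c₁ ≠ c₂ ∧ (∀ c, c = c₁ ∨ c = c₂) ∧
      (c₁.supp.ncard : ℤ) - (c₂.supp.ncard : ℤ) ≤ 1 ∧
      (c₂.supp.ncard : ℤ) - (c₁.supp.ncard : ℤ) ≤ 1

/-- `A ⊆ V(C_n)` is good: both `A` and its complement are almost good. -/
def GoodSet (n : ℕ) [NeZero n] (A : Finset (ZMod n)) : Prop :=
  AlmostGood n A ∧ AlmostGood n (Finset.univ \ A)

/-- The color class of color `i` for the coloring `f`. -/
def colorClass {V : Type*} [Fintype V] {k : ℕ} (f : V → Fin k) (i : Fin k) : Finset V :=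
  Finset.univ.filter (fun v => f v = i)

/-- The Wiener index of a coloring: the sum of the Wiener indices of its color classes. -/
noncomputable def wienerColoring {V : Type*} [Fintype V] [DecidableEq V] {k : ℕ}
    (G : SimpleGraph V) (f : V → Fin k) : ℕ :=
  ∑ i : Fin k, wienerSet G (colorClass f i)

/-- The type of a coloring, as the multiset of cardinalities of its color classes
(equality of multisets is equality of the nondecreasing rearrangements). -/
def colorType {V : Type*} [Fintype V] {k : ℕ} (f : V → Fin k) : Multiset ℕ :=
  (Finset.univ : Finset (Fin k)).val.map (fun i => (colorClass f i).card)

/-- `f` is a `k`-color weak maximizer of `W` on `G`. -/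
def IsWeakMaximizer {V : Type*} [Fintype V] [DecidableEq V] {k : ℕ}
    (G : SimpleGraph V) (f : V → Fin k) : Prop :=
  Function.Surjective f ∧ ∀ g : V → Fin k, Function.Surjective g →
    colorType g = colorType f → wienerColoring G g ≤ wienerColoring G f

/-- The coloring obtained from `f` by swapping the colors of `u` and `v`. -/
def swapColors {V α : Type*} [DecidableEq V] (f : V → α) (u v : V) : V → α :=
  f ∘ Equiv.swap u v

/-- `f` is a `k`-color local weak maximizer of `W` on `G`. -/
def IsLocalWeakMaximizer {V : Type*} [Fintype V] [DecidableEq V] {k : ℕ}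
    (G : SimpleGraph V) (f : V → Fin k) : Prop :=
  Function.Surjective f ∧ ∀ u v : V, G.Adj u v →
    wienerColoring G (swapColors f u v) ≤ wienerColoring G f

/-- The number of vertices to the left of `u` in the path that get the same color as `u`. -/
def leftCount {n k : ℕ} (f : Fin n → Fin k) (u : Fin n) : ℕ :=
  (Finset.univ.filter (fun w => w < u ∧ f w = f u)).card

/-- The number of vertices to the right of `u` in the path that get the same color as `u`. -/
def rightCount {n k : ℕ} (f : Fin n → Fin k) (u : Fin n) : ℕ :=
  (Finset.univ.filter (fun w => u < w ∧ f w = f u)).card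

/-- The sum of the `j` largest entries of a multiset of naturals. -/
def sumLargest (s : Multiset ℕ) (j : ℕ) : ℕ :=
  (((s.sort (· ≤ ·)).reverse).take j).sum

/-- `x ≺ y` : `x` is majorized by `y`. -/
def MajorizedBy (x y : Multiset ℕ) : Prop :=
  x.card = y.card ∧ x.sum = y.sum ∧ ∀ j, sumLargest x j ≤ sumLargest y j

/-- The reverse Robin Hood transfer `R_{j,j'}` applied to the (sorted) list `t`,
with `j ≤ j'` zero-indexed: subtract `1` from the `j`-th entry and add `1` to the `j'`-th
entry; the result is recorded as a multiset (i.e. up to rearrangement). -/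
def rhTransfer (t : List ℕ) (j j' : ℕ) : Multiset ℕ :=
  ↑((t.set j (t.getD j 0 - 1)).set j' ((t.set j (t.getD j 0 - 1)).getD j' 0 + 1))

/-- `t(n,k)` : the unique nondecreasing `k`-tuple of positive integers summing to `n`
whose entries pairwise differ by at most one, as a multiset. -/
def equitableType (n k : ℕ) : Multiset ℕ :=
  Multiset.replicate (k - n % k) (n / k) + Multiset.replicate (n % k) (n / k + 1)

/-- One step of the operation `R`: `s ∈ R({t})`, i.e. `s = t` or `s` is obtained from `t` by
a reverse Robin Hood transfer between two entries that are equal and even. -/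
def REstep (t s : Multiset ℕ) : Prop :=
  s = t ∨ ∃ m : ℕ, Even m ∧ 2 ≤ t.count m ∧
    s = (t - Multiset.replicate 2 m) + {m - 1, m + 1}

/-- `s ∈ R^∞({t(n,k)})`. -/
def InRInfty (n k : ℕ) (s : Multiset ℕ) : Prop :=
  Relation.ReflTransGen REstep (equitableType n k) s

section Distance

variable {n : ℕ}

lemma cycleGraphZMod_adj {u v : ZMod n} :
    (cycleGraphZMod n).Adj u v ↔ u ≠ v ∧ (v = u + 1 ∨ u = v + 1) := by
  simp [cycleGraphZMod, SimpleGraph.fromRel_adj]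

lemma exists_walk_add_natCast (hn : 1 < n) (u : ZMod n) (m : ℕ) :
    ∃ p : (cycleGraphZMod n).Walk u (u + m), p.length = m := by
  have : Fact (1 < n) := ⟨hn⟩
  induction m with
  | zero => exact ⟨(Walk.nil : (cycleGraphZMod n).Walk u u).copy rfl (by simp), by simp⟩
  | succ m ih =>
    obtain ⟨p, hp⟩ := ih
    have h : (cycleGraphZMod n).Adj (u + m) (u + (m + 1 : ℕ)) := by
      rw [cycleGraphZMod_adj]
      push_cast
      refine ⟨fun h => ?_, Or.inl (by ring)⟩
      rw [← add_assoc] at h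
      exact one_ne_zero (left_eq_add.mp h)
    exact ⟨p.concat h, by simp [hp]⟩

lemma exists_walk_valMinAbs (hn : 1 < n) (u v : ZMod n) :
    ∃ p : (cycleGraphZMod n).Walk u v, p.length = (u - v).valMinAbs.natAbs := by
  have hc := ZMod.coe_valMinAbs (u - v)
  rcases Int.natAbs_eq (u - v).valMinAbs with h | h
  · rw [h] at hc
    have hv : v + ((u - v).valMinAbs.natAbs : ZMod n) = u := by
      rw [← Int.cast_natCast, hc]; ring
    obtain ⟨p, hp⟩ := exists_walk_add_natCast hn v (u - v).valMinAbs.natAbs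
    exact ⟨(p.copy rfl hv).reverse, by simpa using hp⟩
  · rw [h] at hc
    have hu : u + ((u - v).valMinAbs.natAbs : ZMod n) = v := by
      rw [Int.cast_neg, Int.cast_natCast] at hc
      linear_combination -hc
    obtain ⟨p, hp⟩ := exists_walk_add_natCast hn u (u - v).valMinAbs.natAbs
    exact ⟨p.copy rfl hu, by simpa using hp⟩

lemma natAbs_valMinAbs_one_le [NeZero n] : (1 : ZMod n).valMinAbs.natAbs ≤ 1 := by
  rw [ZMod.valMinAbs_natAbs_eq_min]
  refine (min_le_left _ _).trans ?_
  rw [← Nat.cast_one, ZMod.val_natCast]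
  exact Nat.mod_le 1 n

lemma natAbs_valMinAbs_le_length [NeZero n] {u v : ZMod n} (p : (cycleGraphZMod n).Walk u v) :
    (u - v).valMinAbs.natAbs ≤ p.length := by
  induction p with
  | nil => simp
  | @cons u w v h p ih =>
    have h1 : (u - w).valMinAbs.natAbs ≤ 1 := by
      rcases (cycleGraphZMod_adj.mp h).2 with rfl | rfl
      · rw [← ZMod.natAbs_valMinAbs_neg]
        simpa using natAbs_valMinAbs_one_le
      · simpa using natAbs_valMinAbs_one_le
    have h2 := ZMod.natAbs_valMinAbs_add_le (u - w) (w - v)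
    rw [sub_add_sub_cancel] at h2
    rw [Walk.length_cons]
    have := Int.natAbs_add_le (u - w).valMinAbs (w - v).valMinAbs
    omega

lemma cycleGraphZMod_dist [NeZero n] (hn : 1 < n) (u v : ZMod n) :
    (cycleGraphZMod n).dist u v = (u - v).valMinAbs.natAbs := by
  obtain ⟨p, hp⟩ := exists_walk_valMinAbs hn u v
  refine le_antisymm (hp ▸ SimpleGraph.dist_le p) ?_
  obtain ⟨q, hq⟩ := p.reachable.exists_walk_length_eq_dist
  exact hq ▸ natAbs_valMinAbs_le_length q

lemma wienerSet_cycleGraphZMod [NeZero n] (hn : 1 < n) (A : Finset (ZMod n)) :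
    wienerSet (cycleGraphZMod n) A = (∑ u ∈ A, ∑ v ∈ A, (u - v).valMinAbs.natAbs) / 2 := by
  have h0 : ∑ p ∈ A.diag, (p.1 - p.2).valMinAbs.natAbs = 0 :=
    Finset.sum_eq_zero fun p hp => by simp [(Finset.mem_diag.mp hp).2]
  have h := Finset.sum_union (Finset.disjoint_diag_offDiag A)
    (f := fun p => (p.1 - p.2).valMinAbs.natAbs)
  rw [Finset.diag_union_offDiag, h0, zero_add, Finset.sum_product] at h
  rw [wienerSet, h]
  simp only [cycleGraphZMod_dist hn]

end Distance

/-- The increment of the maximal Wiener index on `C_{2r+1}` when passing from `i` to `i + 1`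
vertices. -/
def maxWienerStep (r i : ℕ) : ℕ :=
  if Even i then i / 2 * (r + 1) else (i + 1) / 2 * r

/-- The maximal Wiener index of a set of `m` vertices of `C_{2r+1}`. -/
def maxWiener (r m : ℕ) : ℕ :=
  ∑ i ∈ range m, maxWienerStep r i

section MaxWiener

variable {r : ℕ}

lemma maxWienerStep_even (r j : ℕ) : maxWienerStep r (2 * j) = j * (r + 1) := by
  simp [maxWienerStep]

lemma maxWienerStep_odd (r j : ℕ) : maxWienerStep r (2 * j + 1) = (j + 1) * r := by
  have h : (2 * j + 1 + 1) / 2 = j + 1 := by omega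
  simp [maxWienerStep, h]

lemma maxWiener_succ (r m : ℕ) : maxWiener r (m + 1) = maxWiener r m + maxWienerStep r m :=
  Finset.sum_range_succ _ _

lemma two_mul_maxWiener_even (r j : ℕ) : 2 * maxWiener r (2 * j) + j = (2 * r + 1) * j ^ 2 := by
  induction j with
  | zero => simp [maxWiener]
  | succ j ih =>
    rw [show 2 * (j + 1) = 2 * j + 1 + 1 by ring, maxWiener_succ, maxWiener_succ,
      maxWienerStep_even, maxWienerStep_odd]
    linarith

lemma two_mul_maxWiener_odd (r j : ℕ) :
    2 * maxWiener r (2 * j + 1) = (2 * r + 1) * (j * (j + 1)) := by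
  have h := two_mul_maxWiener_even r j
  rw [maxWiener_succ, maxWienerStep_even]
  linarith

lemma maxWienerStep_strictMonoOn (r : ℕ) : StrictMonoOn (maxWienerStep r) (Set.Iic (2 * r)) := by
  refine strictMonoOn_of_lt_succ Set.ordConnected_Iic fun i _ hi hi' => ?_
  simp only [Set.mem_Iic, Order.succ_eq_add_one] at hi hi' ⊢
  obtain ⟨j, rfl | rfl⟩ := Nat.even_or_odd' i
  · rw [maxWienerStep_even, maxWienerStep_odd]
    nlinarith
  · rw [show 2 * j + 1 + 1 = 2 * (j + 1) by ring, maxWienerStep_even, maxWienerStep_odd]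
    nlinarith

/-- `maxWiener r` lies above the secant line through `q` and `q + 1`. -/
lemma secant_le_maxWiener {q x : ℕ} (hq : q ≤ 2 * r) (hx : x ≤ 2 * r + 1) :
    (maxWiener r q : ℤ) + (x - q) * maxWienerStep r q ≤ maxWiener r x := by
  have hmono := (maxWienerStep_strictMonoOn r).monotoneOn
  rcases le_total q x with h | h
  · induction x, h using Nat.le_induction with
    | base => simp
    | succ x h ih =>
      have h1 := ih (by omega)
      have h2 : maxWienerStep r q ≤ maxWienerStep r x :=
        hmono (Set.mem_Iic.mpr hq) (Set.mem_Iic.mpr (by omega)) h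
      rw [maxWiener_succ]
      push_cast
      zify at h2
      linarith
  · induction h using Nat.decreasingInduction with
    | self => simp
    | of_succ x h ih =>
      have h1 := ih (by omega)
      have h2 : maxWienerStep r x ≤ maxWienerStep r q :=
        hmono (Set.mem_Iic.mpr (by omega)) (Set.mem_Iic.mpr hq) h.le
      rw [maxWiener_succ] at h1
      push_cast at h1
      zify at h2
      linarith

end MaxWiener

section UpperBound

variable {n r : ℕ} [NeZero n]

/-- The arc of `r` consecutive vertices of the cycle starting at `i`. -/
def arc (r : ℕ) (i : ZMod n) : Finset (ZMod n) :=
  univ.filter fun x => (x - i).val < r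

lemma card_filter_val (p : ℕ → Prop) [DecidablePred p] :
    #{w : ZMod n | p w.val} = #{i ∈ range n | p i} := by
  refine Finset.card_bij (fun w _ => w.val) (fun w hw => ?_)
    (fun _ _ _ _ h => ZMod.val_injective n h) (fun i hi => ?_)
  · simp only [mem_filter, mem_univ, true_and] at hw
    exact mem_filter.mpr ⟨mem_range.mpr (ZMod.val_lt w), hw⟩
  · simp only [mem_filter, mem_range] at hi
    exact ⟨(i : ZMod n), by simpa [ZMod.val_natCast_of_lt hi.1] using hi.2,
      ZMod.val_natCast_of_lt hi.1⟩

lemma card_filter_mem_arc (hr : r ≤ n) (x : ZMod n) : #{i | x ∈ arc r i} = r := by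
  have h : #{i | x ∈ arc r i} = #{w : ZMod n | w.val < r} :=
    Finset.card_equiv (Equiv.subLeft x) (by simp [arc])
  rw [h, card_filter_val (fun i => i < r)]
  have : {i ∈ range n | i < r} = range r := by
    ext i; simp only [mem_filter, mem_range]; omega
  rw [this, card_range]

lemma card_filter_separating_arc (hnr : n = 2 * r + 1) (u v : ZMod n) :
    #{i | u ∈ arc r i ∧ v ∉ arc r i} = (u - v).valMinAbs.natAbs := by
  have h : #{i | u ∈ arc r i ∧ v ∉ arc r i}
      = #{w : ZMod n | w.val < r ∧ ¬ (w.val + (v - u).val) % n < r} := by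
    refine Finset.card_equiv (Equiv.subLeft u) fun i => ?_
    have : v - i = (u - i) + (v - u) := by ring
    simp only [arc, mem_filter, mem_univ, true_and, Equiv.subLeft_apply]
    rw [this, ZMod.val_add]
  rw [h, card_filter_val (fun i => i < r ∧ ¬ (i + (v - u).val) % n < r),
    ← ZMod.natAbs_valMinAbs_neg, neg_sub, ZMod.valMinAbs_natAbs_eq_min]
  have hc := ZMod.val_lt (v - u)
  generalize (v - u).val = c at hc ⊢
  rcases le_or_gt c r with hcr | hcr
  · have : {i ∈ range n | i < r ∧ ¬ (i + c) % n < r} = Ico (r - c) r := by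
      ext i
      simp only [mem_filter, mem_range, mem_Ico]
      constructor
      · rintro ⟨_, h1, h2⟩
        rw [Nat.mod_eq_of_lt (by omega)] at h2
        omega
      · rintro ⟨h1, h2⟩
        rw [Nat.mod_eq_of_lt (by omega)]
        omega
    rw [this, Nat.card_Ico]
    omega
  · have : {i ∈ range n | i < r ∧ ¬ (i + c) % n < r} = range (n - c) := by
      ext i
      simp only [mem_filter, mem_range]
      constructor
      · rintro ⟨_, h1, h2⟩
        by_contra h3
        rw [Nat.mod_eq_sub_mod (by omega), Nat.mod_eq_of_lt (by omega)] at h2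
        omega
      · intro h1
        rw [Nat.mod_eq_of_lt (by omega)]
        omega
    rw [this, card_range]
    omega

lemma sum_card_inter_arc (hr : r ≤ n) (A : Finset (ZMod n)) :
    ∑ i, #{x ∈ A | x ∈ arc r i} = r * #A := by
  simp_rw [Finset.card_filter]
  rw [Finset.sum_comm]
  simp_rw [← Finset.card_filter, card_filter_mem_arc hr]
  simp [mul_comm]

lemma sum_valMinAbs_eq_sum_arc (hnr : n = 2 * r + 1) (A : Finset (ZMod n)) :
    ∑ u ∈ A, ∑ v ∈ A, (u - v).valMinAbs.natAbs
      = ∑ i, #{x ∈ A | x ∈ arc r i} * #{x ∈ A | x ∉ arc r i} := by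
  simp_rw [← card_filter_separating_arc hnr, Finset.card_filter, Finset.sum_mul_sum]
  have (i : ZMod n) (u v : ZMod n) : (if u ∈ arc r i then 1 else 0) * (if v ∉ arc r i then 1 else 0)
      = if u ∈ arc r i ∧ v ∉ arc r i then 1 else 0 := by
    split_ifs <;> simp_all
  simp_rw [this]
  rw [Finset.sum_comm (s := univ)]
  exact Finset.sum_congr rfl fun u _ => Finset.sum_comm

lemma sum_valMinAbs_le (hnr : n = 2 * r + 1) (A : Finset (ZMod n)) :
    ∑ u ∈ A, ∑ v ∈ A, (u - v).valMinAbs.natAbs ≤ 2 * maxWiener r #A := by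
  rw [sum_valMinAbs_eq_sum_arc hnr]
  have hsum := sum_card_inter_arc (r := r) (by omega) A
  have hsplit (i : ZMod n) := Finset.card_filter_add_card_filter_not (s := A) (· ∈ arc r i)
  obtain ⟨j, hj | hj⟩ := Nat.even_or_odd' #A
  · have hb (i : ZMod n) : #{x ∈ A | x ∈ arc r i} * #{x ∈ A | x ∉ arc r i} + j
        ≤ j ^ 2 + #{x ∈ A | x ∈ arc r i} := by
      have hi := hsplit i
      generalize #{x ∈ A | x ∈ arc r i} = a at *
      generalize #{x ∈ A | x ∉ arc r i} = b at *
      zify at hi hj ⊢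
      have hb : (b : ℤ) = 2 * j - a := by linarith
      rw [hb]
      rcases le_or_gt (j : ℤ) a with h | h <;> nlinarith
    have h := Finset.sum_le_sum fun i (_ : i ∈ univ) => hb i
    have h2 := two_mul_maxWiener_even r j
    rw [Finset.sum_add_distrib, Finset.sum_add_distrib, hsum] at h
    simp only [sum_const, card_univ, ZMod.card, smul_eq_mul] at h
    rw [hj] at h ⊢
    rw [← hnr] at h2
    have h3 : n * j = r * (2 * j) + j := by rw [hnr]; ring
    linarith
  · have hb (i : ZMod n) : #{x ∈ A | x ∈ arc r i} * #{x ∈ A | x ∉ arc r i} ≤ j * (j + 1) := by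
      have hi := hsplit i
      generalize #{x ∈ A | x ∈ arc r i} = a at *
      generalize #{x ∈ A | x ∉ arc r i} = b at *
      rcases le_or_gt a j with h | h <;> nlinarith
    have h := Finset.sum_le_sum fun i (_ : i ∈ univ) => hb i
    have h2 := two_mul_maxWiener_odd r j
    simp only [sum_const, card_univ, ZMod.card, smul_eq_mul] at h
    rwa [hj, h2, ← hnr]

lemma wienerSet_le_maxWiener (hr : 0 < r) (hnr : n = 2 * r + 1) (A : Finset (ZMod n)) :
    wienerSet (cycleGraphZMod n) A ≤ maxWiener r #A := by
  rw [wienerSet_cycleGraphZMod (by omega)]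
  have := sum_valMinAbs_le hnr A
  omega

end UpperBound

section Attained

variable {n r : ℕ}

lemma two_mul_add_one_eq_zero {n r : ℕ} (hnr : n = 2 * r + 1) : (2 * r + 1 : ZMod n) = 0 := by
  have h : ((2 * r + 1 : ℕ) : ZMod n) = 0 := (ZMod.natCast_eq_zero_iff _ _).mpr hnr.dvd
  exact_mod_cast h

lemma natAbs_valMinAbs_mul_even (hnr : n = 2 * r + 1) {t : ℕ} (ht : t ≤ r) :
    ((r : ZMod n) * (2 * t : ℕ)).valMinAbs.natAbs = t := by
  have h0 : (2 * r + 1 : ZMod n) = 0 := two_mul_add_one_eq_zero hnr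
  have : (r : ZMod n) * (2 * t : ℕ) = -(t : ZMod n) := by
    push_cast; linear_combination (t : ZMod n) * h0
  rw [this, ZMod.natAbs_valMinAbs_neg, ZMod.valMinAbs_natCast_of_le_half (by omega),
    Int.natAbs_natCast]

lemma natAbs_valMinAbs_mul_odd (hnr : n = 2 * r + 1) {t : ℕ} (ht : t ≤ r) :
    ((r : ZMod n) * (2 * t + 1 : ℕ)).valMinAbs.natAbs = r - t := by
  have h0 : (2 * r + 1 : ZMod n) = 0 := two_mul_add_one_eq_zero hnr
  have : (r : ZMod n) * (2 * t + 1 : ℕ) = ((r - t : ℕ) : ZMod n) := by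
    push_cast [Nat.cast_sub ht]; linear_combination (t : ZMod n) * h0
  rw [this, ZMod.valMinAbs_natCast_of_le_half (by omega), Int.natAbs_natCast]

lemma sum_range_natAbs_valMinAbs_mul (hnr : n = 2 * r + 1) {m : ℕ} (hm : m ≤ 2 * r) :
    ∑ j ∈ range m, ((r : ZMod n) * (j + 1 : ℕ)).valMinAbs.natAbs = maxWienerStep r m := by
  induction m with
  | zero => simp [maxWienerStep]
  | succ m ih =>
    rw [Finset.sum_range_succ, ih (by omega)]
    obtain ⟨j, rfl | rfl⟩ := Nat.even_or_odd' m
    · rw [natAbs_valMinAbs_mul_odd hnr (by omega), maxWienerStep_even, maxWienerStep_odd]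
      zify [show j ≤ r by omega]
      ring
    · rw [show 2 * j + 1 + 1 = 2 * (j + 1) by ring, natAbs_valMinAbs_mul_even hnr (by omega),
        maxWienerStep_even, maxWienerStep_odd]
      ring

lemma sum_range_sum_range_natAbs_valMinAbs (hnr : n = 2 * r + 1) {m : ℕ} (hm : m ≤ n) :
    ∑ a ∈ range m, ∑ b ∈ range m, ((r : ZMod n) * a - r * b).valMinAbs.natAbs
      = 2 * maxWiener r m := by
  induction m with
  | zero => simp [maxWiener]
  | succ m ih =>
    have h : ∑ b ∈ range m, ((r : ZMod n) * m - r * b).valMinAbs.natAbs = maxWienerStep r m := by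
      rw [← sum_range_natAbs_valMinAbs_mul hnr (by omega), ← Finset.sum_range_reflect]
      refine Finset.sum_congr rfl fun b hb => ?_
      rw [mem_range] at hb
      rw [← mul_sub, ← Nat.cast_sub (by omega)]
      congr 5
      omega
    have h' : ∑ a ∈ range m, ((r : ZMod n) * a - r * m).valMinAbs.natAbs = maxWienerStep r m := by
      rw [← h]
      refine Finset.sum_congr rfl fun b _ => ?_
      rw [← ZMod.natAbs_valMinAbs_neg, neg_sub]
    simp_rw [Finset.sum_range_succ, Finset.sum_add_distrib]
    rw [ih (by omega), h, h', maxWiener_succ]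
    simp
    ring

lemma natCast_mul_left_injective (hnr : n = 2 * r + 1) :
    Function.Injective fun x : ZMod n => (r : ZMod n) * x := by
  have h0 : (2 * r + 1 : ZMod n) = 0 := two_mul_add_one_eq_zero hnr
  intro x y h
  simp only at h
  linear_combination (-2 : ZMod n) * h + (x - y) * h0

/-- Color classes of any prescribed positive sizes can be chosen to be simultaneously maximizers
of the Wiener index. -/
lemma exists_coloring [NeZero n] (hr : 0 < r) (hnr : n = 2 * r + 1) {k : ℕ} (m : Fin k → ℕ)
    (hm : ∀ i, 0 < m i) (hsum : ∑ i, m i = n) :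
    ∃ g : ZMod n → Fin k, Function.Surjective g ∧ (∀ i, #(colorClass g i) = m i) ∧
      wienerColoring (cycleGraphZMod n) g = ∑ i, maxWiener r (m i) := by
  let e : (Σ i : Fin k, Fin (m i)) → ZMod n :=
    fun p => (r : ZMod n) * ((finSigmaFinEquiv p : ℕ) : ZMod n)
  have hinj : Function.Injective e := by
    intro p q h
    have h1 := natCast_mul_left_injective hnr h
    have h2 := congrArg ZMod.val h1
    rw [ZMod.val_natCast_of_lt (hsum ▸ (finSigmaFinEquiv p).2),
      ZMod.val_natCast_of_lt (hsum ▸ (finSigmaFinEquiv q).2)] at h2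
    exact finSigmaFinEquiv.injective (Fin.ext h2)
  have hbij : Function.Bijective e := by
    rw [Fintype.bijective_iff_injective_and_card]
    exact ⟨hinj, by simp [hsum, ZMod.card]⟩
  let E := Equiv.ofBijective e hbij
  let g : ZMod n → Fin k := fun x => (E.symm x).1
  have hinj' (i : Fin k) : Function.Injective fun j : Fin (m i) => e ⟨i, j⟩ :=
    hinj.comp sigma_mk_injective
  have hclass (i : Fin k) : colorClass g i = univ.image fun j : Fin (m i) => e ⟨i, j⟩ := by
    ext x
    simp only [colorClass, mem_filter, mem_univ, true_and, mem_image]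
    constructor
    · rintro rfl
      exact ⟨(E.symm x).2, E.apply_symm_apply x⟩
    · rintro ⟨j, rfl⟩
      exact congrArg Sigma.fst (E.symm_apply_apply ⟨i, j⟩)
  have hcard (i : Fin k) : #(colorClass g i) = m i := by
    rw [hclass, Finset.card_image_of_injective _ (hinj' i), card_univ, Fintype.card_fin]
  refine ⟨g, fun i => ⟨e ⟨i, ⟨0, hm i⟩⟩, congrArg Sigma.fst (E.symm_apply_apply _)⟩, hcard,
    Finset.sum_congr rfl fun i _ => ?_⟩
  have hmi : m i ≤ n := hsum ▸ Finset.single_le_sum (fun _ _ => Nat.zero_le _) (mem_univ i)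
  rw [wienerSet_cycleGraphZMod (by omega), hclass,
    Finset.sum_image (hinj' i).injOn]
  simp_rw [Finset.sum_image (hinj' i).injOn]
  have hsub (a b : Fin (m i)) : e ⟨i, a⟩ - e ⟨i, b⟩ = (r : ZMod n) * (a : ℕ) - r * (b : ℕ) := by
    simp only [e, finSigmaFinEquiv_apply]
    push_cast
    ring
  simp_rw [hsub]
  have h := sum_range_sum_range_natAbs_valMinAbs hnr hmi
  simp_rw [← Fin.sum_univ_eq_sum_range
    (fun b => ((r : ZMod n) * _ - r * (b : ZMod n)).valMinAbs.natAbs)] at h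
  rw [← Fin.sum_univ_eq_sum_range (fun a => ∑ b : Fin (m i),
    ((r : ZMod n) * (a : ZMod n) - r * ((b : ℕ) : ZMod n)).valMinAbs.natAbs)] at h
  omega

end Attained

section WeakMaximizer

variable {n r k : ℕ} [NeZero n]

lemma sum_card_colorClass {V : Type*} [Fintype V] (f : V → Fin k) :
    ∑ i, #(colorClass f i) = Fintype.card V :=
  (Finset.card_eq_sum_card_fiberwise fun _ _ => mem_univ _).symm

lemma card_colorClass_pos {V : Type*} [Fintype V] {f : V → Fin k} (hf : Function.Surjective f)
    (i : Fin k) : 0 < #(colorClass f i) := by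
  obtain ⟨v, hv⟩ := hf i
  exact card_pos.mpr ⟨v, by simpa [colorClass] using hv⟩

lemma sum_eq_of_colorType_eq {V : Type*} [Fintype V] {f g : V → Fin k}
    (h : colorType g = colorType f) (M : ℕ → ℕ) :
    ∑ i, M #(colorClass g i) = ∑ i, M #(colorClass f i) := by
  have := congrArg (fun s => (s.map M).sum) h
  rwa [colorType, colorType, Multiset.map_map, Multiset.map_map] at this

lemma wienerColoring_le (hr : 0 < r) (hnr : n = 2 * r + 1) (f : ZMod n → Fin k) :
    wienerColoring (cycleGraphZMod n) f ≤ ∑ i, maxWiener r #(colorClass f i) :=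
  Finset.sum_le_sum fun _ _ => wienerSet_le_maxWiener hr hnr _

lemma isWeakMaximizer_of_eq (hr : 0 < r) (hnr : n = 2 * r + 1) {f : ZMod n → Fin k}
    (hf : Function.Surjective f)
    (h : wienerColoring (cycleGraphZMod n) f = ∑ i, maxWiener r #(colorClass f i)) :
    IsWeakMaximizer (cycleGraphZMod n) f :=
  ⟨hf, fun g _ hg => by
    rw [h, ← sum_eq_of_colorType_eq hg]
    exact wienerColoring_le hr hnr g⟩

lemma IsWeakMaximizer.wienerColoring_eq (hr : 0 < r) (hnr : n = 2 * r + 1) {f : ZMod n → Fin k}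
    (hf : IsWeakMaximizer (cycleGraphZMod n) f) :
    wienerColoring (cycleGraphZMod n) f = ∑ i, maxWiener r #(colorClass f i) := by
  refine le_antisymm (wienerColoring_le hr hnr f) ?_
  obtain ⟨g, hg, hcard, hw⟩ := exists_coloring hr hnr (fun i => #(colorClass f i))
    (card_colorClass_pos hf.1) (by rw [sum_card_colorClass, ZMod.card])
  exact hw ▸ hf.2 g hg (by simp only [colorType, hcard])

end WeakMaximizer

/-- Moving one unit from a larger to a smaller part strictly decreases the sum of the maximal
Wiener indices. -/
lemma sum_maxWiener_transfer_lt {r k : ℕ} (m : Fin k → ℕ) {i j : Fin k} (hi : m i ≤ 2 * r + 1)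
    (hij : m j + 1 < m i) :
    ∃ m' : Fin k → ℕ, (∀ l, min (m l) (m i - 1) ≤ m' l) ∧ ∑ l, m' l = ∑ l, m l ∧
      ∑ l, maxWiener r (m' l) < ∑ l, maxWiener r (m l) := by
  have hne : j ≠ i := by rintro rfl; omega
  let m' := Function.update (Function.update m i (m i - 1)) j (m j + 1)
  have hsum (M : ℕ → ℕ) : ∑ l, M (m' l) + M (m i) + M (m j)
      = ∑ l, M (m l) + M (m i - 1) + M (m j + 1) := by
    have hj' : j ∈ univ.erase i := mem_erase.mpr ⟨hne, mem_univ _⟩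
    rw [← Finset.add_sum_erase univ (fun l => M (m' l)) (mem_univ i),
      ← Finset.add_sum_erase univ (fun l => M (m l)) (mem_univ i),
      ← Finset.add_sum_erase (univ.erase i) (fun l => M (m' l)) hj',
      ← Finset.add_sum_erase (univ.erase i) (fun l => M (m l)) hj',
      Finset.sum_congr rfl fun l hl => (by
        simp only [mem_erase] at hl
        simp [m', hl.1, hl.2.1] : M (m' l) = M (m l))]
    simp [m', hne.symm]
    ring
  refine ⟨m', fun l => ?_, ?_, ?_⟩
  · simp only [m', Function.update_apply]
    split_ifs with h1 h2 <;> subst_vars <;> omega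
  · have := hsum id
    simp only [id] at this
    omega
  · have h := hsum (maxWiener r)
    have h1 := maxWiener_succ r (m i - 1)
    have h2 := maxWiener_succ r (m j)
    rw [Nat.sub_add_cancel (by omega)] at h1
    have h3 : maxWienerStep r (m j) < maxWienerStep r (m i - 1) :=
      maxWienerStep_strictMonoOn r (Set.mem_Iic.mpr (by omega)) (Set.mem_Iic.mpr (by omega))
        (by omega)
    omega

lemma sum_maxWiener_le_of_equitable {r k : ℕ} [NeZero k] {m m' : Fin k → ℕ}
    (hm : ∀ i j, m i ≤ m j + 1) (hsum : ∑ i, m i = ∑ i, m' i) (hlt : ∀ i, m i ≤ 2 * r)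
    (hle : ∀ i, m' i ≤ 2 * r + 1) :
    ∑ i, maxWiener r (m i) ≤ ∑ i, maxWiener r (m' i) := by
  obtain ⟨i₀, hi₀⟩ := Finite.exists_min m
  have heq (i : Fin k) : (maxWiener r (m i) : ℤ)
      = maxWiener r (m i₀) + (m i - m i₀) * maxWienerStep r (m i₀) := by
    rcases (show m i = m i₀ ∨ m i = m i₀ + 1 by have := hm i i₀; have := hi₀ i; omega) with h | h
    · simp [h]
    · rw [h, maxWiener_succ]
      push_cast
      ring
  zify at hsum ⊢
  calc ∑ i, (maxWiener r (m i) : ℤ)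
      = ∑ i, ((maxWiener r (m i₀) : ℤ) + (m' i - m i₀) * maxWienerStep r (m i₀)) := by
        rw [Finset.sum_congr rfl fun i _ => heq i]
        simp_rw [Finset.sum_add_distrib, ← Finset.sum_mul, Finset.sum_sub_distrib, hsum]
    _ ≤ _ := Finset.sum_le_sum fun i _ => secant_le_maxWiener (hlt i₀) (hle i)

/-- For `2 ≤ k ≤ n` with `n` odd and `f` a `k`-color weak maximizer of `W` on `C_n`:
`W(f)` is minimal among `k`-color weak maximizers iff the sizes of any two color classes
of `f` differ by at most one. -/
theorem cycle_min_odd (n k : ℕ) [NeZero n] (hk : 2 ≤ k) (hkn : k ≤ n) (hn : Odd n)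
    (f : ZMod n → Fin k) (hf : IsWeakMaximizer (cycleGraphZMod n) f) :
    (∀ g : ZMod n → Fin k, IsWeakMaximizer (cycleGraphZMod n) g →
        wienerColoring (cycleGraphZMod n) f ≤ wienerColoring (cycleGraphZMod n) g)
      ↔ ∀ i j : Fin k, (colorClass f i).card ≤ (colorClass f j).card + 1 := by
  obtain ⟨r, hnr⟩ := hn
  have hr : 0 < r := by omega
  have : NeZero k := ⟨by omega⟩
  have hsum (g : ZMod n → Fin k) : ∑ i, #(colorClass g i) = n := by
    rw [sum_card_colorClass, ZMod.card]
  have hle (g : ZMod n → Fin k) (i : Fin k) : #(colorClass g i) ≤ 2 * r + 1 :=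
    (card_le_univ _).trans_eq ((ZMod.card n).trans hnr)
  rw [hf.wienerColoring_eq hr hnr]
  constructor
  · intro hmin i j
    by_contra! hij
    obtain ⟨m', hpos, hsum', hlt⟩ :=
      sum_maxWiener_transfer_lt (fun l => #(colorClass f l)) (hle f i) hij
    have hpos' (l : Fin k) : 0 < m' l := by
      have := hpos l
      have := card_colorClass_pos hf.1 l
      omega
    obtain ⟨g, hg, hcard, hw⟩ := exists_coloring hr hnr m' hpos' (hsum'.trans (hsum f))
    have hgmax := isWeakMaximizer_of_eq hr hnr hg (by simpa only [hcard] using hw)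
    have := hmin g hgmax
    omega
  · intro heq g hg
    rw [hg.wienerColoring_eq hr hnr]
    refine sum_maxWiener_le_of_equitable heq ((hsum f).trans (hsum g).symm) (fun i => ?_) (hle g)
    have : Nontrivial (Fin k) := Fin.nontrivial_iff_two_le.mpr hk
    obtain ⟨j, hj⟩ := exists_ne i
    have h1 := card_colorClass_pos hf.1 j
    have h2 := Finset.add_le_sum (fun l _ => Nat.zero_le #(colorClass f l)) (mem_univ i)
      (mem_univ j) hj.symm
    rw [hsum f] at h2
    omega
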